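/- The operators b_+ and b_− on V_α⊗ℂ² are complementary idempotent U_q(sl_2)-intertwiners: b_+ + b_− = Id; b_+² = b_+ and b_−² = b_−; and b_± commute with the coproduct actions Δ(E), Δ(F), and Δ(K^{±1}) on V_α⊗ℂ². -/

import Mathlib

noncomputable section

/-- The Verma module `V_α`: finitely supported complex sequences, basis `|n⟩`. -/
abbrev Verma : Type := ℕ →₀ ℂ

/-- The basis vector `|n⟩`. -/
noncomputable def ket (n : ℕ) : Verma := Finsupp.single n 1

/-- The linear operator on `Verma` determined by its values on the basis vectors. -/
noncomputable def ladderOp (t : ℕ → Verma) : Module.End ℂ Verma :=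
  Finsupp.lsum ℂ fun n => LinearMap.toSpanSingleton ℂ Verma (t n)

/-- The q-deformed number `[x]_q` with `q = e^h`. -/
noncomputable def qnum (h x : ℂ) : ℂ :=
  (Complex.exp (h * x) - Complex.exp (-(h * x))) / (Complex.exp h - Complex.exp (-h))

/-- `E |n⟩ = [n]_q [α−n]_q |n−1⟩`, `E |0⟩ = 0`. -/
noncomputable def Eop (h α : ℂ) : Module.End ℂ Verma :=
  ladderOp fun n => if n = 0 then 0 else (qnum h n * qnum h (α - n)) • ket (n - 1)

/-- `F |n⟩ = |n+1⟩`. -/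
noncomputable def Fop : Module.End ℂ Verma := ladderOp fun n => ket (n + 1)

/-- `K |n⟩ = q^{α−1−2n} |n⟩`. -/
noncomputable def Kop (h α : ℂ) : Module.End ℂ Verma :=
  ladderOp fun n => Complex.exp (h * (α - 1 - 2 * n)) • ket n

/-- `K⁻¹ |n⟩ = q^{−(α−1−2n)} |n⟩`. -/
noncomputable def Kinv (h α : ℂ) : Module.End ℂ Verma :=
  ladderOp fun n => Complex.exp (-(h * (α - 1 - 2 * n))) • ket n

/-- Operators on `V_α ⊗ ℂ²` as 2×2 matrices with entries in `End(V_α)`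
(rows/columns indexed by the `ℂ²` basis `↑, ↓`). -/
abbrev Op2 : Type := Matrix (Fin 2) (Fin 2) (Module.End ℂ Verma)

/-- The projector `b_+` on the summand `V_{α+1}` of `V_α ⊗ ℂ²`. -/
noncomputable def bPlus (h α : ℂ) : Op2 :=
  (Complex.exp (h * α) - Complex.exp (-(h * α)))⁻¹ •
    !![(-Complex.exp (-h)) • Kinv h α + Complex.exp (h * α) • 1,
        (Complex.exp h - Complex.exp (-h)) • Fop;
        (Complex.exp h * (Complex.exp h - Complex.exp (-h))) • (Kinv h α * Eop h α),
        Complex.exp h • Kinv h α - Complex.exp (-(h * α)) • 1]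

/-- The projector `b_−` on the summand `V_{α-1}` of `V_α ⊗ ℂ²`. -/
noncomputable def bMinus (h α : ℂ) : Op2 :=
  (-(Complex.exp (h * α) - Complex.exp (-(h * α)))⁻¹) •
    !![(-Complex.exp (-h)) • Kinv h α + Complex.exp (-(h * α)) • 1,
        (Complex.exp h - Complex.exp (-h)) • Fop;
        (Complex.exp h * (Complex.exp h - Complex.exp (-h))) • (Kinv h α * Eop h α),
        Complex.exp h • Kinv h α - Complex.exp (h * α) • 1]

/-- The coproduct action `Δ(E) = 1⊗E + E⊗K` on `V_α ⊗ ℂ²`. -/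
noncomputable def coE (h α : ℂ) : Op2 :=
  !![Complex.exp h • Eop h α, 1; 0, Complex.exp (-h) • Eop h α]

/-- The coproduct action `Δ(F) = K⁻¹⊗F + F⊗1` on `V_α ⊗ ℂ²`. -/
noncomputable def coF (h α : ℂ) : Op2 :=
  !![Fop, 0; Kinv h α, Fop]

/-- The coproduct action `Δ(K) = K⊗K` on `V_α ⊗ ℂ²`. -/
noncomputable def coK (h α : ℂ) : Op2 :=
  !![Complex.exp h • Kop h α, 0; 0, Complex.exp (-h) • Kop h α]

/-- The coproduct action `Δ(K⁻¹) = K⁻¹⊗K⁻¹` on `V_α ⊗ ℂ²`. -/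
noncomputable def coKinv (h α : ℂ) : Op2 :=
  !![Complex.exp (-h) • Kinv h α, 0; 0, Complex.exp h • Kinv h α]

/-!
The Casimir element acts on `V_β` by the scalar `χ(β) = q^β + q^{-β}`. Writing `C` for its action on
`V_α ⊗ ℂ²`, a computation with 2×2 matrices gives `(C - χ(α - 1)) (C - χ(α + 1)) = 0`, and `b_±`
turn out to be the Lagrange basis polynomials of the two eigenvalues `χ(α ± 1)`, evaluated at `C`.
They are therefore the complementary spectral idempotents of `C`, and they commute with the action
of `U_q(sl₂)` because `C` does.
-/

open Complex (exp exp_add exp_neg exp_ne_zero exp_nat_mul)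
open Polynomial (aeval)
open Lagrange (basisDivisor basisDivisor_add_symm)

/-- An algebra homomorphism `U_q(sl₂) → A`, recorded as the images of the generators. The relation
for `E * F - F * E` is multiplied by `q - q⁻¹`, hence faithful only for `q ^ 2 ≠ 1`. -/
structure UqSl2Rep {k : Type*} [Field k] (q : k) (A : Type*) [Ring A] [Algebra k A] where
  E : A
  F : A
  K : A
  Kinv : A
  K_mul_Kinv : K * Kinv = 1
  Kinv_mul_K : Kinv * K = 1
  K_mul_E : K * E = q ^ 2 • (E * K)
  F_mul_K : F * K = q ^ 2 • (K * F)
  smul_E_mul_F_sub : (q - q⁻¹) • (E * F - F * E) = K - Kinv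

namespace UqSl2Rep

section

variable {k : Type*} [Field k] {q : k} {A : Type*} [Ring A] [Algebra k A] (ρ : UqSl2Rep q A)

theorem E_mul_Kinv : ρ.E * ρ.Kinv = q ^ 2 • (ρ.Kinv * ρ.E) :=
  calc ρ.E * ρ.Kinv = ρ.Kinv * (ρ.K * ρ.E) * ρ.Kinv := by
        rw [← mul_assoc ρ.Kinv, ρ.Kinv_mul_K, one_mul]
    _ = q ^ 2 • (ρ.Kinv * ρ.E) := by
        rw [ρ.K_mul_E, mul_smul_comm, smul_mul_assoc, ← mul_assoc, mul_assoc, ρ.K_mul_Kinv, mul_one]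

theorem Kinv_mul_F : ρ.Kinv * ρ.F = q ^ 2 • (ρ.F * ρ.Kinv) :=
  calc ρ.Kinv * ρ.F = ρ.Kinv * (ρ.F * ρ.K) * ρ.Kinv := by
        rw [mul_assoc ρ.Kinv, mul_assoc ρ.F, ρ.K_mul_Kinv, mul_one]
    _ = q ^ 2 • (ρ.F * ρ.Kinv) := by
        rw [ρ.F_mul_K, mul_smul_comm, smul_mul_assoc, ← mul_assoc, ρ.Kinv_mul_K, one_mul]

/-- The quantum Casimir element, rescaled by `(q - q⁻¹) ^ 2` to avoid denominators. -/
def casimir : A := (q - q⁻¹) ^ 2 • (ρ.F * ρ.E) + q • ρ.K + q⁻¹ • ρ.Kinv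

theorem casimir_eq_E_mul_F :
    ρ.casimir = (q - q⁻¹) ^ 2 • (ρ.E * ρ.F) + q⁻¹ • ρ.K + q • ρ.Kinv := by
  rw [casimir]
  linear_combination (norm := module) (q⁻¹ - q) • ρ.smul_E_mul_F_sub

theorem smul_Kinv_mul_F_mul_E : (q - q⁻¹) ^ 2 • (ρ.Kinv * ρ.F * ρ.E) =
    ρ.Kinv * ρ.casimir - q • 1 - q⁻¹ • (ρ.Kinv * ρ.Kinv) := by
  simp only [casimir, mul_add, mul_smul_comm, Kinv_mul_K, mul_assoc]
  abel

theorem smul_Kinv_mul_E_mul_F : (q - q⁻¹) ^ 2 • (ρ.Kinv * ρ.E * ρ.F) =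
    ρ.Kinv * ρ.casimir - q⁻¹ • 1 - q • (ρ.Kinv * ρ.Kinv) := by
  simp only [casimir_eq_E_mul_F, mul_add, mul_smul_comm, Kinv_mul_K, mul_assoc]
  abel

/-- The numerator of the projectors `b_±`, with `a = q^{±α}` and `b = q^{∓α}`. -/
def projectorNumerator (a b : k) : Matrix (Fin 2) (Fin 2) A :=
  !![a • 1 - q⁻¹ • ρ.Kinv, (q - q⁻¹) • ρ.F;
    (q * (q - q⁻¹)) • (ρ.Kinv * ρ.E), q • ρ.Kinv - b • 1]

theorem casimir_commute_E : Commute ρ.casimir ρ.E :=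
  calc ρ.casimir * ρ.E
      = (q - q⁻¹) ^ 2 • (ρ.E * ρ.F * ρ.E) + q⁻¹ • (ρ.K * ρ.E) + q • (ρ.Kinv * ρ.E) := by
        simp only [casimir_eq_E_mul_F, add_mul, smul_mul_assoc]
    _ = (q - q⁻¹) ^ 2 • (ρ.E * (ρ.F * ρ.E)) + q • (ρ.E * ρ.K) + q⁻¹ • (ρ.E * ρ.Kinv) := by
        simp only [K_mul_E, E_mul_Kinv, smul_smul, pow_two q, ← mul_assoc, inv_mul_mul_self]
    _ = ρ.E * ρ.casimir := by simp only [casimir, mul_add, mul_smul_comm]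

theorem casimir_commute_F : Commute ρ.casimir ρ.F :=
  calc ρ.casimir * ρ.F
      = (q - q⁻¹) ^ 2 • (ρ.F * ρ.E * ρ.F) + q • (ρ.K * ρ.F) + q⁻¹ • (ρ.Kinv * ρ.F) := by
        simp only [casimir, add_mul, smul_mul_assoc]
    _ = (q - q⁻¹) ^ 2 • (ρ.F * (ρ.E * ρ.F)) + q⁻¹ • (ρ.F * ρ.K) + q • (ρ.F * ρ.Kinv) := by
        simp only [F_mul_K, Kinv_mul_F, smul_smul, pow_two q, ← mul_assoc, inv_mul_mul_self]
    _ = ρ.F * ρ.casimir := by simp only [casimir_eq_E_mul_F, mul_add, mul_smul_comm]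

variable (hq : q ≠ 0)
include hq

theorem F_mul_E_commute_K : Commute (ρ.F * ρ.E) ρ.K := by
  refine smul_right_injective A (pow_ne_zero 2 hq) ?_
  calc q ^ 2 • (ρ.F * ρ.E * ρ.K) = ρ.F * ρ.K * ρ.E := by
        rw [mul_assoc, ← mul_smul_comm, ← K_mul_E, mul_assoc]
    _ = q ^ 2 • (ρ.K * (ρ.F * ρ.E)) := by rw [F_mul_K, smul_mul_assoc, mul_assoc]

theorem casimir_commute_K : Commute ρ.casimir ρ.K :=
  (((ρ.F_mul_E_commute_K hq).smul_left _).add_left ((Commute.refl ρ.K).smul_left q)).add_left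
    (Commute.smul_left (ρ.Kinv_mul_K.trans ρ.K_mul_Kinv.symm) q⁻¹)

theorem casimir_commute_Kinv : Commute ρ.casimir ρ.Kinv :=
  Commute.units_inv_right (u := ⟨ρ.K, ρ.Kinv, ρ.K_mul_Kinv, ρ.Kinv_mul_K⟩) (ρ.casimir_commute_K hq)

theorem inv_smul_Kinv_mul_F : q⁻¹ • (ρ.Kinv * ρ.F) = q • (ρ.F * ρ.Kinv) := by
  rw [Kinv_mul_F, smul_smul, pow_two, inv_mul_cancel_left₀ hq]

theorem inv_smul_E_mul_Kinv : q⁻¹ • (ρ.E * ρ.Kinv) = q • (ρ.Kinv * ρ.E) := by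
  rw [E_mul_Kinv, smul_smul, pow_two, inv_mul_cancel_left₀ hq]

/-- The tensor product of `ρ` with the fundamental representation `ℂ²`, via the coproduct
`Δ(E) = 1 ⊗ E + E ⊗ K`, `Δ(F) = K⁻¹ ⊗ F + F ⊗ 1`; matrices are indexed by the basis `↑, ↓`. -/
@[simps]
def tensorFundamental : UqSl2Rep q (Matrix (Fin 2) (Fin 2) A) where
  E := !![q • ρ.E, 1; 0, q⁻¹ • ρ.E]
  F := !![ρ.F, 0; ρ.Kinv, ρ.F]
  K := !![q • ρ.K, 0; 0, q⁻¹ • ρ.K]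
  Kinv := !![q⁻¹ • ρ.Kinv, 0; 0, q • ρ.Kinv]
  K_mul_Kinv := by simp [Matrix.one_fin_two, K_mul_Kinv, hq]
  Kinv_mul_K := by simp [Matrix.one_fin_two, Kinv_mul_K, hq]
  K_mul_E := by simp [K_mul_E, smul_smul, hq, pow_two, mul_assoc, mul_left_comm q]
  F_mul_K := by
    simp [F_mul_K, smul_smul, hq, pow_two, mul_assoc, mul_left_comm q, K_mul_Kinv, Kinv_mul_K]
  smul_E_mul_F_sub := by
    have upper : (q - q⁻¹) • (q • (ρ.E * ρ.F) + ρ.Kinv - q • (ρ.F * ρ.E)) =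
        q • ρ.K - q⁻¹ • ρ.Kinv := by
      linear_combination (norm := module) q • ρ.smul_E_mul_F_sub
    have lower : (q - q⁻¹) • (q⁻¹ • (ρ.E * ρ.F) - (ρ.Kinv + q⁻¹ • (ρ.F * ρ.E))) =
        q⁻¹ • ρ.K - q • ρ.Kinv := by
      linear_combination (norm := module) q⁻¹ • ρ.smul_E_mul_F_sub
    simp [upper, lower, inv_smul_E_mul_Kinv, hq]

theorem casimir_tensorFundamental : (ρ.tensorFundamental hq).casimir =
    !![q • ρ.casimir - (q⁻¹ * (q - q⁻¹)) • ρ.Kinv, (q - q⁻¹) ^ 2 • ρ.F;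
      (q * (q - q⁻¹) ^ 2) • (ρ.Kinv * ρ.E), q⁻¹ • ρ.casimir + (q * (q - q⁻¹)) • ρ.Kinv] := by
  rw [casimir, tensorFundamental_E, tensorFundamental_F, tensorFundamental_K,
    tensorFundamental_Kinv, Matrix.mul_fin_two, casimir]
  ext i j
  fin_cases i <;> fin_cases j <;>
    simp only [Fin.mk_one, Fin.zero_eta, Matrix.add_apply, Matrix.smul_apply, Matrix.of_apply,
      Matrix.cons_val', Matrix.cons_val_zero, Matrix.cons_val_one, Matrix.cons_val_fin_one,
      mul_smul_comm, mul_one, mul_zero, zero_mul] <;>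
    module

theorem casimir_tensorFundamental_sub {a b : k} (hC : ρ.casimir = (a + b) • 1) :
    (ρ.tensorFundamental hq).casimir - (q⁻¹ * a + q * b) • 1 =
      (q - q⁻¹) • ρ.projectorNumerator a b := by
  rw [casimir_tensorFundamental, hC, projectorNumerator, Matrix.one_fin_two]
  ext1 i j
  fin_cases i <;> fin_cases j <;>
    simp only [Fin.mk_one, Fin.zero_eta, Matrix.sub_apply, Matrix.smul_apply, Matrix.of_apply,
      Matrix.cons_val', Matrix.cons_val_zero, Matrix.cons_val_one, Matrix.cons_val_fin_one] <;>
    module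

theorem projectorNumerator_mul {a b : k} (hab : a * b = 1) (hC : ρ.casimir = (a + b) • 1) :
    ρ.projectorNumerator a b * ρ.projectorNumerator b a = 0 := by
  have hKF := ρ.inv_smul_Kinv_mul_F hq
  have hKE : q⁻¹ • (ρ.Kinv * ρ.E * ρ.Kinv) = q • (ρ.Kinv * (ρ.Kinv * ρ.E)) := by
    rw [mul_assoc, ← mul_smul_comm, inv_smul_E_mul_Kinv _ hq, mul_smul_comm]
  have hKFE : q⁻¹ • (ρ.Kinv * ρ.F * ρ.E) = q • (ρ.F * (ρ.Kinv * ρ.E)) := by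
    rw [← smul_mul_assoc, hKF, smul_mul_assoc, mul_assoc]
  have hFE := ρ.smul_Kinv_mul_F_mul_E
  have hEF := ρ.smul_Kinv_mul_E_mul_F
  rw [hC, mul_smul_comm, mul_one] at hFE hEF
  have upperLeft : (a • 1 - q⁻¹ • ρ.Kinv) * (b • 1 - q⁻¹ • ρ.Kinv) +
      (q - q⁻¹) • ρ.F * ((q * (q - q⁻¹)) • (ρ.Kinv * ρ.E)) = 0 := by
    simp only [mul_sub, sub_mul, smul_mul_assoc, mul_smul_comm, one_mul, mul_one]
    linear_combination (norm := (match_scalars <;> field_simp <;> ring))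
      q⁻¹ • hFE - (q - q⁻¹) ^ 2 • hKFE + hab • (1 : A)
  have upperRight : (a • 1 - q⁻¹ • ρ.Kinv) * ((q - q⁻¹) • ρ.F) +
      (q - q⁻¹) • ρ.F * (q • ρ.Kinv - a • 1) = 0 := by
    simp only [mul_sub, sub_mul, smul_mul_assoc, mul_smul_comm, one_mul, mul_one]
    linear_combination (norm := module) -(q - q⁻¹) • hKF
  have lowerLeft : (q * (q - q⁻¹)) • (ρ.Kinv * ρ.E) * (b • 1 - q⁻¹ • ρ.Kinv) +
      (q • ρ.Kinv - b • 1) * ((q * (q - q⁻¹)) • (ρ.Kinv * ρ.E)) = 0 := by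
    simp only [mul_sub, sub_mul, smul_mul_assoc, mul_smul_comm, one_mul, mul_one]
    linear_combination (norm := module) -(q * (q - q⁻¹)) • hKE
  have lowerRight : (q * (q - q⁻¹)) • (ρ.Kinv * ρ.E) * ((q - q⁻¹) • ρ.F) +
      (q • ρ.Kinv - b • 1) * (q • ρ.Kinv - a • 1) = 0 := by
    simp only [mul_sub, sub_mul, smul_mul_assoc, mul_smul_comm, one_mul, mul_one]
    linear_combination (norm := (match_scalars <;> field_simp <;> ring))
      q • hEF + hab • (1 : A)
  rw [projectorNumerator, projectorNumerator, Matrix.mul_fin_two, upperLeft, upperRight, lowerLeft,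
    lowerRight]
  exact Matrix.etaExpand_eq 0

theorem casimir_tensorFundamental_sub_mul_sub {a b : k} (hab : a * b = 1)
    (hC : ρ.casimir = (a + b) • 1) :
    ((ρ.tensorFundamental hq).casimir - (q⁻¹ * a + q * b) • 1) *
      ((ρ.tensorFundamental hq).casimir - (q⁻¹ * b + q * a) • 1) = 0 := by
  rw [ρ.casimir_tensorFundamental_sub hq hC,
    ρ.casimir_tensorFundamental_sub hq (hC.trans (by rw [add_comm])), smul_mul_smul_comm,
    ρ.projectorNumerator_mul hq hab hC, smul_zero]

end

end UqSl2Rep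

section SpectralIdempotent

variable {k A : Type*} [Field k] [Ring A] [Algebra k A] {x y : A} {μ ν : k}

theorem aeval_basisDivisor (x : A) (μ ν : k) :
    aeval x (basisDivisor μ ν) = (μ - ν)⁻¹ • (x - ν • 1) := by
  simp [basisDivisor, Algebra.smul_def]

theorem aeval_basisDivisor_add_symm (x : A) (hμν : μ ≠ ν) :
    aeval x (basisDivisor μ ν) + aeval x (basisDivisor ν μ) = 1 := by
  rw [← map_add, basisDivisor_add_symm hμν, map_one]

theorem isIdempotentElem_aeval_basisDivisor (hμν : μ ≠ ν)
    (hx : (x - ν • 1) * (x - μ • 1) = 0) :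
    IsIdempotentElem (aeval x (basisDivisor μ ν)) ∧
      IsIdempotentElem (aeval x (basisDivisor ν μ)) := by
  refine IsIdempotentElem.of_mul_add ?_ (aeval_basisDivisor_add_symm x hμν)
  rw [aeval_basisDivisor, aeval_basisDivisor, smul_mul_smul_comm, hx, smul_zero]

theorem commute_aeval_basisDivisor (hxy : Commute x y) (μ ν : k) :
    Commute (aeval x (basisDivisor μ ν)) y := by
  rw [aeval_basisDivisor]
  exact (hxy.sub_left ((Commute.one_left y).smul_left ν)).smul_left _

end SpectralIdempotent

/-- The scalar `q^β + q^{-β}` by which the Casimir element acts on the Verma module `V_β`. -/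
def casimirScalar (h β : ℂ) : ℂ := exp (h * β) + exp (-(h * β))

theorem exp_sub_inv_ne_zero {h : ℂ} (hq : exp h ^ 2 ≠ 1) : exp h - (exp h)⁻¹ ≠ 0 := fun H =>
  hq (by rw [pow_two, ← mul_inv_cancel₀ (exp_ne_zero h), ← sub_eq_zero.mp H])

theorem casimirScalar_add_sub_casimirScalar_sub (h x y : ℂ) :
    casimirScalar h (x + y) - casimirScalar h (x - y) =
      (exp (h * x) - exp (-(h * x))) * (exp (h * y) - exp (-(h * y))) := by
  rw [casimirScalar, casimirScalar, mul_add, mul_sub, neg_add, neg_sub, sub_eq_add_neg (h * x),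
    sub_eq_add_neg (h * y), exp_add, exp_add, exp_add, exp_add]
  ring

theorem casimirScalar_add_one (h x : ℂ) : casimirScalar h (x + 1) =
    (exp h)⁻¹ * exp (-(h * x)) + exp h * exp (h * x) := by
  rw [casimirScalar, mul_add, mul_one, neg_add, exp_add, exp_add, exp_neg h]
  ring

theorem casimirScalar_sub_one (h x : ℂ) : casimirScalar h (x - 1) =
    (exp h)⁻¹ * exp (h * x) + exp h * exp (-(h * x)) := by
  rw [casimirScalar, mul_sub, mul_one, neg_sub, sub_eq_add_neg, sub_eq_add_neg, exp_add, exp_add,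
    exp_neg h]
  ring

theorem casimirScalar_add_one_sub_casimirScalar_sub_one (h x : ℂ) :
    casimirScalar h (x + 1) - casimirScalar h (x - 1) =
      (exp h - (exp h)⁻¹) * (exp (h * x) - exp (-(h * x))) := by
  rw [casimirScalar_add_one, casimirScalar_sub_one]
  ring

theorem sub_inv_mul_qnum {h : ℂ} (hq : exp h ^ 2 ≠ 1) (x : ℂ) :
    (exp h - (exp h)⁻¹) * qnum h x = exp (h * x) - exp (-(h * x)) := by
  rw [qnum, exp_neg h, mul_div_cancel₀ _ (exp_sub_inv_ne_zero hq)]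

theorem sq_mul_qnum_mul_qnum {h : ℂ} (hq : exp h ^ 2 ≠ 1) (x y : ℂ) :
    (exp h - (exp h)⁻¹) ^ 2 * (qnum h y * qnum h x) =
      casimirScalar h (x + y) - casimirScalar h (x - y) := by
  rw [casimirScalar_add_sub_casimirScalar_sub, ← sub_inv_mul_qnum hq, ← sub_inv_mul_qnum hq]
  ring

theorem sub_inv_mul_qnum_commutator {h : ℂ} (hq : exp h ^ 2 ≠ 1) (α x : ℂ) :
    (exp h - (exp h)⁻¹) * (qnum h (x + 1) * qnum h (α - (x + 1)) - qnum h x * qnum h (α - x)) =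
      exp (h * (α - 1 - 2 * x)) - exp (-(h * (α - 1 - 2 * x))) := by
  refine mul_left_cancel₀ (exp_sub_inv_ne_zero hq) ?_
  rw [← casimirScalar_add_one_sub_casimirScalar_sub_one, ← mul_assoc, ← pow_two, mul_sub,
    sq_mul_qnum_mul_qnum hq, sq_mul_qnum_mul_qnum hq]
  ring_nf

theorem sq_mul_exp_weight_succ (h α : ℂ) (n : ℕ) :
    exp h ^ 2 * exp (h * (α - 1 - 2 * (n + 1 : ℕ))) = exp (h * (α - 1 - 2 * n)) := by
  rw [← exp_nat_mul, ← exp_add]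
  congr 1
  push_cast
  ring

theorem verma_end_ext {S T : Module.End ℂ Verma} (hST : ∀ n, S (ket n) = T (ket n)) : S = T :=
  Finsupp.lhom_ext' fun n => LinearMap.ext_ring (hST n)

theorem neg_smul_add_eq_sub (c : ℂ) (S T : Module.End ℂ Verma) : (-c) • S + T = T - c • S := by
  module

theorem ladderOp_ket (t : ℕ → Verma) (n : ℕ) : ladderOp t (ket n) = t n := by
  simp [ladderOp, ket]

theorem qnum_zero (h : ℂ) : qnum h 0 = 0 := by simp [qnum]

section
variable (h α : ℂ) (n : ℕ)

theorem Eop_ket : Eop h α (ket n) = (qnum h n * qnum h (α - n)) • ket (n - 1) := by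
  rcases n with _ | n <;> simp [Eop, ladderOp_ket, qnum_zero]

theorem Fop_ket : Fop (ket n) = ket (n + 1) := ladderOp_ket _ n

theorem Kop_ket : Kop h α (ket n) = exp (h * (α - 1 - 2 * n)) • ket n := ladderOp_ket _ n

theorem Kinv_ket : Kinv h α (ket n) = exp (-(h * (α - 1 - 2 * n))) • ket n := ladderOp_ket _ n

theorem Fop_mul_Eop_ket :
    (Fop * Eop h α) (ket n) = (qnum h n * qnum h (α - n)) • ket n := by
  rcases n with _ | n <;> simp [Eop_ket, Fop_ket, qnum_zero]

theorem Eop_mul_Fop_ket :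
    (Eop h α * Fop) (ket n) = (qnum h (n + 1) * qnum h (α - (n + 1))) • ket n := by
  simp [Eop_ket, Fop_ket]

end

section

variable {h : ℂ} (hq : exp h ^ 2 ≠ 1) (α : ℂ)
include hq

/-- The Verma module `V_α` as a representation of `U_q(sl₂)`. -/
@[simps]
def vermaRep : UqSl2Rep (exp h) (Module.End ℂ Verma) where
  E := Eop h α
  F := Fop
  K := Kop h α
  Kinv := Kinv h α
  K_mul_Kinv := verma_end_ext fun n => by simp [Kop_ket, Kinv_ket, smul_smul, ← exp_add]
  Kinv_mul_K := verma_end_ext fun n => by simp [Kop_ket, Kinv_ket, smul_smul, ← exp_add]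
  K_mul_E := verma_end_ext fun n => by
    rcases n with _ | n
    · simp [Eop_ket, Kop_ket, qnum_zero]
    · simp only [Module.End.mul_apply, LinearMap.smul_apply, Eop_ket, Kop_ket, map_smul, smul_smul,
        Nat.add_sub_cancel, ← sq_mul_exp_weight_succ h α n]
      congr 1
      ring
  F_mul_K := verma_end_ext fun n => by
    simp only [Module.End.mul_apply, LinearMap.smul_apply, Fop_ket, Kop_ket, map_smul, smul_smul,
      ← sq_mul_exp_weight_succ h α n]
  smul_E_mul_F_sub := verma_end_ext fun n => by
    simp only [LinearMap.smul_apply, LinearMap.sub_apply, Eop_mul_Fop_ket, Fop_mul_Eop_ket,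
      Kop_ket, Kinv_ket, ← sub_smul, smul_smul, sub_inv_mul_qnum_commutator hq]

theorem casimir_vermaRep : (vermaRep hq α).casimir = casimirScalar h α • 1 :=
  verma_end_ext fun n => by
    simp only [UqSl2Rep.casimir, vermaRep_E, vermaRep_F, vermaRep_K, vermaRep_Kinv,
      LinearMap.add_apply, LinearMap.smul_apply, Fop_mul_Eop_ket, Kop_ket, Kinv_ket, smul_smul,
      ← add_smul, Module.End.one_apply]
    congr 1
    rw [sq_mul_qnum_mul_qnum hq, sub_add_cancel,
      show α - (n : ℂ) - n = α - 1 - 2 * n + 1 by ring, casimirScalar_add_one]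
    ring

/-- The representation `V_α ⊗ ℂ²` of `U_q(sl₂)`. -/
abbrev vermaTensorRep : UqSl2Rep (exp h) Op2 := (vermaRep hq α).tensorFundamental (exp_ne_zero h)

theorem vermaTensorRep_E : (vermaTensorRep hq α).E = coE h α := by simp [coE, exp_neg]

theorem vermaTensorRep_F : (vermaTensorRep hq α).F = coF h α := by simp [coF]

theorem vermaTensorRep_K : (vermaTensorRep hq α).K = coK h α := by simp [coK, exp_neg]

theorem vermaTensorRep_Kinv : (vermaTensorRep hq α).Kinv = coKinv h α := by simp [coKinv, exp_neg]

theorem bPlus_eq_smul_projectorNumerator :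
    bPlus h α = (exp (h * α) - exp (-(h * α)))⁻¹ •
      (vermaRep hq α).projectorNumerator (exp (h * α)) (exp (-(h * α))) := by
  rw [bPlus, UqSl2Rep.projectorNumerator, vermaRep_E, vermaRep_F, vermaRep_Kinv, exp_neg h,
    neg_smul_add_eq_sub]

theorem bMinus_eq_smul_projectorNumerator :
    bMinus h α = (-(exp (h * α) - exp (-(h * α)))⁻¹) •
      (vermaRep hq α).projectorNumerator (exp (-(h * α))) (exp (h * α)) := by
  rw [bMinus, UqSl2Rep.projectorNumerator, vermaRep_E, vermaRep_F, vermaRep_Kinv, exp_neg h,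
    neg_smul_add_eq_sub]

theorem bPlus_eq_aeval_casimir : bPlus h α = aeval (vermaTensorRep hq α).casimir
    (basisDivisor (casimirScalar h (α + 1)) (casimirScalar h (α - 1))) := by
  rw [aeval_basisDivisor (A := Op2), casimirScalar_add_one_sub_casimirScalar_sub_one,
    casimirScalar_sub_one, UqSl2Rep.casimir_tensorFundamental_sub _ _ (casimir_vermaRep hq α),
    smul_smul, mul_inv_rev, inv_mul_cancel_right₀ (exp_sub_inv_ne_zero hq),
    bPlus_eq_smul_projectorNumerator]

theorem bMinus_eq_aeval_casimir : bMinus h α = aeval (vermaTensorRep hq α).casimir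
    (basisDivisor (casimirScalar h (α - 1)) (casimirScalar h (α + 1))) := by
  have hC : (vermaRep hq α).casimir = (exp (-(h * α)) + exp (h * α)) • 1 := by
    rw [casimir_vermaRep, casimirScalar, add_comm]
  rw [aeval_basisDivisor (A := Op2), ← neg_sub, inv_neg,
    casimirScalar_add_one_sub_casimirScalar_sub_one, casimirScalar_add_one,
    UqSl2Rep.casimir_tensorFundamental_sub _ _ hC, smul_smul, neg_mul,
    mul_inv_rev, inv_mul_cancel_right₀ (exp_sub_inv_ne_zero hq), bMinus_eq_smul_projectorNumerator]

theorem casimir_vermaTensorRep_sub_mul_sub :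
    ((vermaTensorRep hq α).casimir - casimirScalar h (α - 1) • 1) *
      ((vermaTensorRep hq α).casimir - casimirScalar h (α + 1) • 1) = 0 := by
  rw [casimirScalar_add_one, casimirScalar_sub_one]
  have hinv : exp (h * α) * exp (-(h * α)) = 1 := by rw [exp_neg, mul_inv_cancel₀ (exp_ne_zero _)]
  exact UqSl2Rep.casimir_tensorFundamental_sub_mul_sub _ _ hinv (casimir_vermaRep hq α)

theorem commute_bPlus_of_commute_casimir {X : Op2} (hX : Commute (vermaTensorRep hq α).casimir X) :
    Commute (bPlus h α) X := by
  rw [bPlus_eq_aeval_casimir hq]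
  exact commute_aeval_basisDivisor (A := Op2) hX _ _

theorem commute_bMinus_of_commute_casimir {X : Op2}
    (hX : Commute (vermaTensorRep hq α).casimir X) : Commute (bMinus h α) X := by
  rw [bMinus_eq_aeval_casimir hq]
  exact commute_aeval_basisDivisor (A := Op2) hX _ _

variable {α} (hα : exp (h * α) ≠ exp (-(h * α)))
include hα

theorem casimirScalar_add_one_ne_casimirScalar_sub_one :
    casimirScalar h (α + 1) ≠ casimirScalar h (α - 1) := by
  rw [← sub_ne_zero, casimirScalar_add_one_sub_casimirScalar_sub_one]
  exact mul_ne_zero (exp_sub_inv_ne_zero hq) (sub_ne_zero.mpr hα)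

theorem bPlus_add_bMinus : bPlus h α + bMinus h α = 1 := by
  rw [bPlus_eq_aeval_casimir hq, bMinus_eq_aeval_casimir hq]
  exact aeval_basisDivisor_add_symm (A := Op2) _
    (casimirScalar_add_one_ne_casimirScalar_sub_one hq hα)

theorem isIdempotentElem_bPlus_bMinus :
    IsIdempotentElem (bPlus h α) ∧ IsIdempotentElem (bMinus h α) := by
  rw [bPlus_eq_aeval_casimir hq, bMinus_eq_aeval_casimir hq]
  exact isIdempotentElem_aeval_basisDivisor (A := Op2)
    (casimirScalar_add_one_ne_casimirScalar_sub_one hq hα) (casimir_vermaTensorRep_sub_mul_sub hq α)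

end

/-- `b_+` and `b_−` are complementary idempotent `U_q(sl_2)`-intertwiners on
`V_α ⊗ ℂ²`. -/
theorem bPlus_bMinus_idempotent_intertwiners (h α : ℂ) (hq : Complex.exp h ^ 2 ≠ 1)
    (hα : Complex.exp (h * α) ≠ Complex.exp (-(h * α))) :
    bPlus h α + bMinus h α = 1 ∧
    bPlus h α * bPlus h α = bPlus h α ∧
    bMinus h α * bMinus h α = bMinus h α ∧
    bPlus h α * coE h α = coE h α * bPlus h α ∧
    bPlus h α * coF h α = coF h α * bPlus h α ∧
    bPlus h α * coK h α = coK h α * bPlus h α ∧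
    bPlus h α * coKinv h α = coKinv h α * bPlus h α ∧
    bMinus h α * coE h α = coE h α * bMinus h α ∧
    bMinus h α * coF h α = coF h α * bMinus h α ∧
    bMinus h α * coK h α = coK h α * bMinus h α ∧
    bMinus h α * coKinv h α = coKinv h α * bMinus h α := by
  obtain ⟨idemPlus, idemMinus⟩ := isIdempotentElem_bPlus_bMinus hq hα
  have commE := (vermaTensorRep hq α).casimir_commute_E
  have commF := (vermaTensorRep hq α).casimir_commute_F
  have commK := (vermaTensorRep hq α).casimir_commute_K (exp_ne_zero h)
  have commKinv := (vermaTensorRep hq α).casimir_commute_Kinv (exp_ne_zero h)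
  rw [vermaTensorRep_E] at commE
  rw [vermaTensorRep_F] at commF
  rw [vermaTensorRep_K] at commK
  rw [vermaTensorRep_Kinv] at commKinv
  exact ⟨bPlus_add_bMinus hq hα, idemPlus, idemMinus,
    commute_bPlus_of_commute_casimir hq α commE, commute_bPlus_of_commute_casimir hq α commF,
    commute_bPlus_of_commute_casimir hq α commK, commute_bPlus_of_commute_casimir hq α commKinv,
    commute_bMinus_of_commute_casimir hq α commE, commute_bMinus_of_commute_casimir hq α commF,
    commute_bMinus_of_commute_casimir hq α commK, commute_bMinus_of_commute_casimir hq α commKinv⟩
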